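/- Let σ ∈ (1,2), c > 0, and Φ_c the complex endpoint soliton of gDNLS with M(Φ_c) = (1/2)‖Φ_c‖², P(Φ_c) = (1/2)Im∫Φ_c∂ₓΦ̄_c dx, and ‖∂ₓΦ_c‖² = (c²/4)‖Φ_c‖². Then the determinant -‖Φ_c‖²_{L²}‖∂ₓΦ_c‖²_{L²} + 4P(Φ_c)² = -σ(2-σ)c² M(Φ_c)², which is nonzero. -/

import Mathlib

open MeasureTheory Complex

noncomputable def phi (σ c x : ℝ) : ℝ :=
  (2*c*(σ+1) / (σ^2 * (c*x)^2 + 1)) ^ (1/(2*σ))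

noncomputable def Phi (σ c : ℝ) (x : ℝ) : ℂ :=
  (phi σ c x : ℂ) *
    Complex.exp (Complex.I * ((c/2) * x : ℝ)
      - (Complex.I / (2*σ + 2)) * ((∫ y in Set.Iio x, (phi σ c y) ^ (2*σ) : ℝ) : ℂ))

noncomputable def Mass (σ c : ℝ) : ℝ := (1/2) * ∫ x : ℝ, ‖Phi σ c x‖^2

noncomputable def Mom (σ c : ℝ) : ℝ :=
  (1/2) * (∫ x : ℝ, Phi σ c x * (starRingEnd ℂ) (deriv (Phi σ c) x)).im

/-!
Write `Φ_c = φ e^{iθ}`. Since `φ^{2σ} = 2c(σ+1)/D` with `D = 1 + (σcx)²`, the phase satisfies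
`θ' = c/2 - c/D`, and `φ' = -(σc²x/D) φ`. Hence `|Φ_c'| = (c/2) φ` pointwise, while
`Im(Φ_c Φ̄_c') = -φ²θ' = cφ²/D - (c/2) φ²`. Now `φ²` is a multiple of `D^{-1/σ}`, and integrating
the derivative of `x (1 + x²)^{-a}` over the line, with `a = 1/σ`, gives
`∫ φ²/D = (1 - σ/2) ∫ φ²`. Therefore `P(Φ_c) = ((1-σ)/2) c M(Φ_c)`, and the determinant equals
`c² M² ((1-σ)² - 1)`.
-/

open Filter Set Topology

section OneAddSq

variable {a : ℝ}

lemma integrable_one_add_sq_rpow_neg (ha : 1 / 2 < a) :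
    Integrable fun x : ℝ => (1 + x ^ 2) ^ (-a) := by
  have h := integrable_rpow_neg_one_add_norm_sq (E := ℝ) (μ := volume) (r := 2 * a)
    (by rw [Module.finrank_self, Nat.cast_one]; linarith)
  refine h.congr (.of_forall fun x => ?_)
  simp only [Real.norm_eq_abs, sq_abs]
  congr 1
  ring

lemma abs_mul_one_add_sq_rpow_neg_le (a x : ℝ) :
    |x * (1 + x ^ 2) ^ (-a)| ≤ (1 + x ^ 2) ^ (-(a - 1 / 2)) := by
  have hD : 0 < 1 + x ^ 2 := by positivity
  have hx : |x| ≤ (1 + x ^ 2) ^ (1 / 2 : ℝ) := by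
    rw [← Real.sqrt_eq_rpow]
    exact Real.abs_le_sqrt (by linarith)
  calc |x * (1 + x ^ 2) ^ (-a)| = |x| * (1 + x ^ 2) ^ (-a) := by
        rw [abs_mul, abs_of_pos (Real.rpow_pos_of_pos hD _)]
    _ ≤ (1 + x ^ 2) ^ (1 / 2 : ℝ) * (1 + x ^ 2) ^ (-a) := by gcongr
    _ = (1 + x ^ 2) ^ (-(a - 1 / 2)) := by
        rw [← Real.rpow_add hD]
        congr 1
        ring

lemma tendsto_mul_one_add_sq_rpow_neg_cocompact (ha : 1 / 2 < a) :
    Tendsto (fun x : ℝ => x * (1 + x ^ 2) ^ (-a)) (cocompact ℝ) (𝓝 0) := by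
  have hsq : Tendsto (fun x : ℝ => 1 + x ^ 2) (cocompact ℝ) atTop := by
    refine tendsto_atTop_add_const_left _ _ ?_
    refine ((tendsto_pow_atTop two_ne_zero).comp (tendsto_norm_cocompact_atTop (E := ℝ))).congr ?_
    simp
  exact squeeze_zero_norm (abs_mul_one_add_sq_rpow_neg_le a)
    ((tendsto_rpow_neg_atTop (sub_pos.2 ha)).comp hsq)

lemma hasDerivAt_mul_one_add_sq_rpow_neg (a x : ℝ) :
    HasDerivAt (fun x : ℝ => x * (1 + x ^ 2) ^ (-a))
      (2 * a * (1 + x ^ 2) ^ (-(a + 1)) - (2 * a - 1) * (1 + x ^ 2) ^ (-a)) x := by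
  have hD : 1 + x ^ 2 ≠ 0 := by positivity
  have hsq : HasDerivAt (fun x : ℝ => 1 + x ^ 2) (2 * x) x := by
    simpa using (hasDerivAt_pow 2 x).const_add 1
  refine ((hasDerivAt_id' x).mul (hsq.rpow_const (p := -a) (.inl hD))).congr_deriv ?_
  have hpow : (1 + x ^ 2) ^ (-a) = (1 + x ^ 2) ^ (-(a + 1)) * (1 + x ^ 2) := by
    rw [← Real.rpow_add_one hD]
    congr 1
    ring
  rw [show -a - 1 = -(a + 1) by ring, hpow]
  ring

lemma integral_one_add_sq_rpow_neg_add_one (ha : 1 / 2 < a) :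
    2 * a * ∫ x : ℝ, (1 + x ^ 2) ^ (-(a + 1)) = (2 * a - 1) * ∫ x : ℝ, (1 + x ^ 2) ^ (-a) := by
  have hi := (integrable_one_add_sq_rpow_neg ha).const_mul (2 * a - 1)
  have hi' := (integrable_one_add_sq_rpow_neg (a := a + 1) (by linarith)).const_mul (2 * a)
  have hlim := tendsto_mul_one_add_sq_rpow_neg_cocompact ha
  rw [cocompact_eq_atBot_atTop, tendsto_sup] at hlim
  have h := integral_of_hasDerivAt_of_tendsto (hasDerivAt_mul_one_add_sq_rpow_neg a)
    (hi'.sub hi) hlim.1 hlim.2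
  rw [integral_sub hi' hi, integral_const_mul, integral_const_mul, sub_zero] at h
  exact sub_eq_zero.1 h

end OneAddSq

lemma hasDerivAt_integral_Iio {E : Type*} [NormedAddCommGroup E] [NormedSpace ℝ E]
    [CompleteSpace E] {f : ℝ → E} {x : ℝ} (hf : Integrable f) (hx : ContinuousAt f x) :
    HasDerivAt (fun u => ∫ y in Iio u, f y) (f x) x := by
  have hsplit : ∀ u, ∫ y in Iio u, f y = (∫ y in (0 : ℝ)..u, f y) + ∫ y in Iic 0, f y := fun u => by
    rw [← integral_Iic_eq_integral_Iio,
      ← intervalIntegral.integral_Iic_sub_Iic hf.integrableOn hf.integrableOn, sub_add_cancel]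
  simp only [hsplit]
  exact (intervalIntegral.integral_hasDerivAt_right hf.intervalIntegrable
    hf.aestronglyMeasurable.stronglyMeasurableAtFilter hx).add_const _

/-- The complex-valued function with amplitude `r` and phase `θ`, used to separate the real
profile of the soliton from its gauge phase. The amplitude is not required to be nonnegative. -/
noncomputable def polar (r θ : ℝ → ℝ) (x : ℝ) : ℂ := r x * cexp (θ x * I)

section Polar

variable {r θ : ℝ → ℝ} {r' θ' x : ℝ}

lemma norm_polar (r θ : ℝ → ℝ) (x : ℝ) : ‖polar r θ x‖ = |r x| := by
  rw [polar, norm_mul, norm_exp_ofReal_mul_I, mul_one, norm_real, Real.norm_eq_abs]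

lemma hasDerivAt_polar (hr : HasDerivAt r r' x) (hθ : HasDerivAt θ θ' x) :
    HasDerivAt (polar r θ) ((r' + (r x * θ' : ℝ) * I) * cexp (θ x * I)) x := by
  refine (hr.ofReal_comp.mul (hθ.ofReal_comp.mul_const I).cexp).congr_deriv ?_
  push_cast
  ring

lemma norm_deriv_polar_sq (hr : HasDerivAt r r' x) (hθ : HasDerivAt θ θ' x) :
    ‖deriv (polar r θ) x‖ ^ 2 = r' ^ 2 + (r x * θ') ^ 2 := by
  rw [(hasDerivAt_polar hr hθ).deriv, norm_mul, norm_exp_ofReal_mul_I, mul_one, Complex.sq_norm,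
    normSq_add_mul_I]

lemma im_polar_mul_conj_deriv (hr : HasDerivAt r r' x) (hθ : HasDerivAt θ θ' x) :
    (polar r θ x * (starRingEnd ℂ) (deriv (polar r θ) x)).im = -(r x ^ 2 * θ') := by
  have hunit : cexp (θ x * I) * (starRingEnd ℂ) (cexp (θ x * I)) = 1 := by
    rw [mul_conj, normSq_eq_norm_sq, norm_exp_ofReal_mul_I]
    norm_num
  calc (polar r θ x * (starRingEnd ℂ) (deriv (polar r θ) x)).im
      = (r x * (starRingEnd ℂ) (r' + (r x * θ' : ℝ) * I) *
          (cexp (θ x * I) * (starRingEnd ℂ) (cexp (θ x * I)))).im := by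
        rw [(hasDerivAt_polar hr hθ).deriv, polar, map_mul]
        ring_nf
    _ = -(r x ^ 2 * θ') := by
        rw [hunit, mul_one, im_ofReal_mul, conj_im, add_im, ofReal_im, im_ofReal_mul, I_im]
        ring

end Polar

section Profile

variable {σ c : ℝ}

lemma phi_eq (σ c x : ℝ) :
    phi σ c x = (2 * c * (σ + 1) / (1 + (σ * c * x) ^ 2)) ^ (1 / (2 * σ)) := by
  unfold phi
  congr 2
  ring

lemma phi_pos (hσ : 0 < σ) (hc : 0 < c) (x : ℝ) : 0 < phi σ c x := by
  unfold phi
  positivity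

lemma phi_rpow (hσ : 0 < σ) (hc : 0 < c) (x : ℝ) :
    phi σ c x ^ (2 * σ) = 2 * c * (σ + 1) / (1 + (σ * c * x) ^ 2) := by
  rw [phi_eq, ← Real.rpow_mul (by positivity), one_div_mul_cancel (by positivity), Real.rpow_one]

lemma phi_sq (hσ : 0 < σ) (hc : 0 < c) (x : ℝ) :
    phi σ c x ^ 2 = (2 * c * (σ + 1)) ^ (1 / σ) * (1 + (σ * c * x) ^ 2) ^ (-(1 / σ)) := by
  have hexp : 1 / (2 * σ) * (2 : ℕ) = 1 / σ := by
    push_cast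
    field_simp
  rw [phi_eq, ← Real.rpow_natCast, ← Real.rpow_mul (by positivity), hexp,
    Real.div_rpow (by positivity) (by positivity), Real.rpow_neg (by positivity), div_eq_mul_inv]

lemma hasDerivAt_phi (hσ : 0 < σ) (hc : 0 < c) (x : ℝ) :
    HasDerivAt (phi σ c) (-(σ * c ^ 2 * x / (1 + (σ * c * x) ^ 2)) * phi σ c x) x := by
  have hq : 2 * c * (σ + 1) / (1 + (σ * c * x) ^ 2) ≠ 0 := by positivity
  have hD : HasDerivAt (fun x => 1 + (σ * c * x) ^ 2) (2 * (σ * c * x) * (σ * c)) x := by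
    simpa using (((hasDerivAt_id' x).const_mul (σ * c)).pow 2).const_add 1
  have h := ((hasDerivAt_const x (2 * c * (σ + 1))).fun_div hD (by positivity)).rpow_const
    (p := 1 / (2 * σ)) (.inl hq)
  rw [← funext (phi_eq σ c)] at h
  refine h.congr_deriv ?_
  rw [Real.rpow_sub_one hq, ← phi_eq]
  field_simp
  ring

lemma continuous_phi (hσ : 0 < σ) (hc : 0 < c) : Continuous (phi σ c) :=
  continuous_iff_continuousAt.2 fun x => (hasDerivAt_phi hσ hc x).continuousAt

lemma integrable_phi_rpow (hσ : 0 < σ) (hc : 0 < c) :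
    Integrable fun x => phi σ c x ^ (2 * σ) := by
  simp only [phi_rpow hσ hc, div_eq_mul_inv]
  exact (integrable_inv_one_add_sq.comp_mul_left' (by positivity)).const_mul _

lemma integrable_phi_sq (hσ : 0 < σ) (hσ₂ : σ < 2) (hc : 0 < c) :
    Integrable fun x => phi σ c x ^ 2 := by
  simp only [phi_sq hσ hc]
  exact ((integrable_one_add_sq_rpow_neg (one_div_lt_one_div_of_lt hσ hσ₂)).comp_mul_left'
    (by positivity)).const_mul _

lemma integral_phi_sq_pos (hσ : 0 < σ) (hσ₂ : σ < 2) (hc : 0 < c) : 0 < ∫ x, phi σ c x ^ 2 :=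
  integral_pos_of_integrable_nonneg_nonzero (x := 0) ((continuous_phi hσ hc).pow 2)
    (integrable_phi_sq hσ hσ₂ hc) (fun _ => sq_nonneg _) (pow_pos (phi_pos hσ hc 0) 2).ne'

lemma phi_sq_div (hσ : 0 < σ) (hc : 0 < c) (x : ℝ) :
    phi σ c x ^ 2 / (1 + (σ * c * x) ^ 2) =
      (2 * c * (σ + 1)) ^ (1 / σ) * (1 + (σ * c * x) ^ 2) ^ (-(1 / σ + 1)) := by
  rw [phi_sq hσ hc, mul_div_assoc, ← Real.rpow_sub_one (by positivity), neg_add']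

lemma integrable_phi_sq_div (hσ : 0 < σ) (hc : 0 < c) :
    Integrable fun x => phi σ c x ^ 2 / (1 + (σ * c * x) ^ 2) := by
  have ha : 1 / 2 < 1 / σ + 1 := by linarith [one_div_pos.2 hσ]
  simp only [phi_sq_div hσ hc]
  exact ((integrable_one_add_sq_rpow_neg ha).comp_mul_left' (by positivity)).const_mul _

lemma integral_phi_sq_div (hσ : 0 < σ) (hσ₂ : σ < 2) (hc : 0 < c) :
    ∫ x, phi σ c x ^ 2 / (1 + (σ * c * x) ^ 2) = (1 - σ / 2) * ∫ x, phi σ c x ^ 2 := by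
  have hratio : ∫ x : ℝ, (1 + x ^ 2) ^ (-(1 / σ + 1)) =
      (1 - σ / 2) * ∫ x : ℝ, (1 + x ^ 2) ^ (-(1 / σ)) := by
    have h := integral_one_add_sq_rpow_neg_add_one (one_div_lt_one_div_of_lt hσ hσ₂)
    field_simp at h ⊢
    linarith
  simp only [phi_sq_div hσ hc]
  simp only [phi_sq hσ hc, integral_const_mul]
  rw [Measure.integral_comp_mul_left (fun x : ℝ => (1 + x ^ 2) ^ (-(1 / σ + 1))),
    Measure.integral_comp_mul_left (fun x : ℝ => (1 + x ^ 2) ^ (-(1 / σ))), hratio]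
  simp only [smul_eq_mul]
  ring

end Profile

/-- The gauge phase `θ` of the soliton `Φ_c = φ_c e^{iθ}`. -/
noncomputable def phase (σ c x : ℝ) : ℝ :=
  c / 2 * x - (∫ y in Iio x, phi σ c y ^ (2 * σ)) / (2 * σ + 2)

section Soliton

variable {σ c : ℝ}

lemma hasDerivAt_phase (hσ : 0 < σ) (hc : 0 < c) (x : ℝ) :
    HasDerivAt (phase σ c) (c / 2 - c / (1 + (σ * c * x) ^ 2)) x := by
  have hcont : Continuous fun y => phi σ c y ^ (2 * σ) :=
    (continuous_phi hσ hc).rpow_const fun y => .inl (phi_pos hσ hc y).ne'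
  have hint := hasDerivAt_integral_Iio (integrable_phi_rpow hσ hc) (hcont.continuousAt (x := x))
  refine (((hasDerivAt_id' x).const_mul (c / 2)).sub
    (hint.div_const (2 * σ + 2))).congr_deriv ?_
  rw [phi_rpow hσ hc]
  field_simp

lemma Phi_eq_polar (σ c : ℝ) : Phi σ c = polar (phi σ c) (phase σ c) := by
  funext x
  unfold Phi polar phase
  congr 2
  push_cast
  ring

lemma norm_Phi (hσ : 0 < σ) (hc : 0 < c) (x : ℝ) : ‖Phi σ c x‖ = phi σ c x := by
  rw [Phi_eq_polar, norm_polar, abs_of_pos (phi_pos hσ hc x)]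

lemma differentiable_Phi (hσ : 0 < σ) (hc : 0 < c) : Differentiable ℝ (Phi σ c) := fun x => by
  rw [Phi_eq_polar]
  exact (hasDerivAt_polar (hasDerivAt_phi hσ hc x) (hasDerivAt_phase hσ hc x)).differentiableAt

lemma norm_deriv_Phi (hσ : 0 < σ) (hc : 0 < c) (x : ℝ) :
    ‖deriv (Phi σ c) x‖ = c / 2 * phi σ c x := by
  have hφ := phi_pos hσ hc x
  rw [← sq_eq_sq₀ (norm_nonneg _) (by positivity), Phi_eq_polar,
    norm_deriv_polar_sq (hasDerivAt_phi hσ hc x) (hasDerivAt_phase hσ hc x)]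
  field_simp
  ring

lemma im_Phi_mul_conj_deriv (hσ : 0 < σ) (hc : 0 < c) (x : ℝ) :
    (Phi σ c x * (starRingEnd ℂ) (deriv (Phi σ c) x)).im =
      c * (phi σ c x ^ 2 / (1 + (σ * c * x) ^ 2)) - c / 2 * phi σ c x ^ 2 := by
  rw [Phi_eq_polar, im_polar_mul_conj_deriv (hasDerivAt_phi hσ hc x) (hasDerivAt_phase hσ hc x)]
  ring

lemma integrable_Phi_mul_conj_deriv (hσ : 0 < σ) (hσ₂ : σ < 2) (hc : 0 < c) :
    Integrable fun x => Phi σ c x * (starRingEnd ℂ) (deriv (Phi σ c) x) := by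
  have hmeas : AEStronglyMeasurable fun x => Phi σ c x * (starRingEnd ℂ) (deriv (Phi σ c) x) :=
    (differentiable_Phi hσ hc).continuous.aestronglyMeasurable.mul
      (continuous_conj.comp_aestronglyMeasurable (aestronglyMeasurable_deriv _ _))
  refine (integrable_norm_iff hmeas).1 (((integrable_phi_sq hσ hσ₂ hc).const_mul (c / 2)).congr
    (.of_forall fun x => ?_))
  simp only [norm_mul, RCLike.norm_conj, norm_Phi hσ hc, norm_deriv_Phi hσ hc]
  ring

lemma Mass_eq (hσ : 0 < σ) (hc : 0 < c) : Mass σ c = 1 / 2 * ∫ x, phi σ c x ^ 2 := by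
  simp only [Mass, norm_Phi hσ hc]

lemma Mass_pos (hσ : 0 < σ) (hσ₂ : σ < 2) (hc : 0 < c) : 0 < Mass σ c := by
  have h := integral_phi_sq_pos hσ hσ₂ hc
  rw [Mass_eq hσ hc]
  positivity

lemma integral_norm_deriv_Phi_sq (hσ : 0 < σ) (hc : 0 < c) :
    ∫ x, ‖deriv (Phi σ c) x‖ ^ 2 = c ^ 2 / 4 * ∫ x, ‖Phi σ c x‖ ^ 2 := by
  simp only [norm_deriv_Phi hσ hc, norm_Phi hσ hc, mul_pow, integral_const_mul]
  ring

lemma Mom_eq (hσ : 0 < σ) (hσ₂ : σ < 2) (hc : 0 < c) :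
    Mom σ c = (1 - σ) / 2 * c * Mass σ c := by
  have hφ := integrable_phi_sq hσ hσ₂ hc
  have hφ_div := integrable_phi_sq_div hσ hc
  have him : (∫ x, Phi σ c x * (starRingEnd ℂ) (deriv (Phi σ c) x)).im =
      ∫ x, (Phi σ c x * (starRingEnd ℂ) (deriv (Phi σ c) x)).im :=
    (integral_im (integrable_Phi_mul_conj_deriv hσ hσ₂ hc)).symm
  simp only [Mom, him, im_Phi_mul_conj_deriv hσ hc]
  rw [integral_sub (hφ_div.const_mul c) (hφ.const_mul (c / 2)), integral_const_mul,
    integral_const_mul, integral_phi_sq_div hσ hσ₂ hc, Mass_eq hσ hc]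
  ring

end Soliton

theorem stmt18_general (σ c : ℝ) (hσ : σ ∈ Set.Ioo (0 : ℝ) 2) (hc : 0 < c) :
    (-(∫ x : ℝ, ‖Phi σ c x‖^2) * (∫ x : ℝ, ‖deriv (Phi σ c) x‖^2) + 4 * (Mom σ c)^2
        = -(σ * (2 - σ) * c^2 * (Mass σ c)^2))
      ∧ -(σ * (2 - σ) * c^2 * (Mass σ c)^2) ≠ 0 := by
  obtain ⟨hσ₀, hσ₂⟩ := hσ
  have hnorm : ∫ x, ‖Phi σ c x‖ ^ 2 = 2 * Mass σ c := by
    unfold Mass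
    ring
  have hM := Mass_pos hσ₀ hσ₂ hc
  have : 0 < 2 - σ := sub_pos.2 hσ₂
  constructor
  · rw [integral_norm_deriv_Phi_sq hσ₀ hc, hnorm, Mom_eq hσ₀ hσ₂ hc]
    ring
  · exact neg_ne_zero.2 (by positivity)

theorem stmt18 (σ c : ℝ) (hσ : σ ∈ Set.Ioo (1:ℝ) 2) (hc : 0 < c) :
    (-(∫ x : ℝ, ‖Phi σ c x‖^2) * (∫ x : ℝ, ‖deriv (Phi σ c) x‖^2) + 4 * (Mom σ c)^2
        = -(σ * (2 - σ) * c^2 * (Mass σ c)^2))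
      ∧ -(σ * (2 - σ) * c^2 * (Mass σ c)^2) ≠ 0 :=
  stmt18_general σ c (Set.Ioo_subset_Ioo_left zero_le_one hσ) hc
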